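/- arXiv:2304.10795 — 2 statements merged into one kernel-verified Lean document; each statement's English description precedes it below -/
import Mathlib

section
/- Let Ŝ be a Neumann subgroup of M̂ = PGL(2,ℤ), and let ι : ℤ → ℤ and δ : ℤ → {1,−1} be the unique functions satisfying Ŝ τ^n ω = Ŝ τ^{ι(n)} ν^{(1−δ(n))/2} for all n ∈ ℤ. Then ι(ι(n) + δ(n)) = ι(n−1) − δ(n−1) for every n ∈ ℤ. -/
open Matrix Pointwise

noncomputable section

abbrev GL2Z := Matrix.GeneralLinearGroup (Fin 2) ℤ

/-- The subgroup {±I} of GL(2,ℤ), which is its center. -/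
def pmI : Subgroup GL2Z := Subgroup.zpowers (-1)

instance pmI_normal : pmI.Normal := by
  constructor
  rintro n hn g
  obtain ⟨k, hk⟩ := Subgroup.mem_zpowers_iff.mp hn
  have hc : Commute ((-1 : GL2Z) ^ k) g := (Commute.neg_one_left g).zpow_left k
  have : g * n * g⁻¹ = n := by
    rw [← hk, ← hc.eq]; group
  rw [this]; exact hn

/-- The extended modular group PGL(2,ℤ) = GL(2,ℤ)/{±I}. -/
abbrev Mhat := GL2Z ⧸ pmI

def pr : GL2Z →* Mhat := QuotientGroup.mk' pmI

def tauGL : GL2Z := ⟨!![1,1;0,1], !![1,-1;0,1], by decide, by decide⟩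
def nuGL : GL2Z := ⟨!![-1,0;0,1], !![-1,0;0,1], by decide, by decide⟩
def omegaGL : GL2Z := ⟨!![0,-1;1,0], !![0,1;-1,0], by decide, by decide⟩
def phiGL : GL2Z := ⟨!![0,-1;1,1], !![1,1;-1,0], by decide, by decide⟩

/-- τ, the class of [[1,1],[0,1]]. -/
def tau : Mhat := pr tauGL
/-- ν, the class of [[-1,0],[0,1]]. -/
def nu : Mhat := pr nuGL
/-- ω, the class of [[0,-1],[1,0]]. -/
def omega : Mhat := pr omegaGL
/-- φ, the class of [[0,-1],[1,1]]. -/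
def phi : Mhat := pr phiGL

/-- T̂ = ⟨τ, ν⟩, the stabilizer of ∞. -/
def That : Subgroup Mhat := Subgroup.closure {tau, nu}

/-- A Neumann subgroup of the extended modular group: a complement of T̂. -/
def IsNeumann (S : Subgroup Mhat) : Prop :=
  (S : Set Mhat) * (That : Set Mhat) = Set.univ ∧ S ⊓ That = ⊥

/-- The modular group PSL(2,ℤ), as the subgroup of PGL(2,ℤ) of classes of
matrices of determinant one. -/
def Msub : Subgroup Mhat :=
  Subgroup.map pr (MonoidHom.ker (Matrix.GeneralLinearGroup.det))

theorem h_pr_eq {a b : GL2Z} (h : a = b ∨ a = -b) : pr a = pr b := by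
  rcases h with h | h
  · rw [h]
  · have h1 : pr (-1) = 1 := by
      exact (QuotientGroup.eq_one_iff (-1 : GL2Z)).mpr (Subgroup.mem_zpowers _)
    rw [h, ← neg_one_mul, map_mul, h1, one_mul]

theorem h_nu2 : nu * nu = 1 := by
  rw [nu, ← map_mul, ← map_one pr]
  apply h_pr_eq; left
  apply Units.ext; simp only [nuGL]; decide

theorem h_nutau : nu * tau * nu = tau⁻¹ := by
  rw [eq_inv_iff_mul_eq_one, nu, tau, ← map_mul, ← map_mul, ← map_mul, ← map_one pr]
  apply h_pr_eq; left
  apply Units.ext; simp only [nuGL, tauGL]; decide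

theorem h_omnu : omega * nu = nu * omega := by
  rw [nu, omega, ← map_mul, ← map_mul]
  apply h_pr_eq; right
  apply Units.ext; simp only [nuGL, omegaGL]; decide

theorem h_braid : tau * (omega * tau * omega) * tau = omega := by
  simp only [tau, omega, ← map_mul]
  apply h_pr_eq
  left; apply Units.ext; simp only [tauGL, omegaGL]; decide

theorem h_tau_zpow (a : ℤ) : ((tauGL ^ a : GL2Z) : Matrix (Fin 2) (Fin 2) ℤ) = !![1, a; 0, 1] := by
  induction a using Int.induction_on with
  | zero => ext i j; fin_cases i <;> fin_cases j <;> simp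
  | succ i ih =>
    rw [_root_.zpow_add_one, Units.val_mul, ih]
    simp [tauGL, Matrix.mul_fin_two, add_comm]
  | pred i ih =>
    have : ((tauGL⁻¹ : GL2Z) : Matrix (Fin 2) (Fin 2) ℤ) = !![1, -1; 0, 1] := rfl
    rw [_root_.zpow_sub_one, Units.val_mul, ih, this]
    simp [Matrix.mul_fin_two]
    ring

theorem h_pr_one {g : GL2Z} (h : pr g = 1) : (g : Matrix (Fin 2) (Fin 2) ℤ) 0 1 = 0 := by
  have h1 : g ∈ pmI := (QuotientGroup.eq_one_iff g).mp h
  obtain ⟨k, rfl⟩ := Subgroup.mem_zpowers_iff.mp h1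
  rcases Int.even_or_odd k with hk | hk
  · rw [hk.neg_one_zpow]; simp
  · have : (-1 : GL2Z) ^ k = -1 := hk.neg_one_zpow
    rw [this]; simp

theorem h_nu_cases (k : ℤ) : nu ^ k = 1 ∨ nu ^ k = nu := by
  rcases Int.even_or_odd' k with ⟨m, hk | hk⟩
  · left; rw [hk, _root_.zpow_mul, _root_.zpow_two, h_nu2, _root_.one_zpow]
  · right; rw [hk, _root_.zpow_add_one, _root_.zpow_mul, _root_.zpow_two, h_nu2, _root_.one_zpow, one_mul]

theorem h_uniq {a k : ℤ} (h : tau ^ a * nu ^ k = 1) : a = 0 := by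
  rcases h_nu_cases k with hk | hk <;> rw [hk] at h
  · rw [mul_one, tau, ← map_zpow] at h
    have := h_pr_one h
    rw [h_tau_zpow] at this
    simpa using this
  · rw [tau, nu, ← map_zpow, ← map_mul] at h
    have := h_pr_one h
    rw [Units.val_mul, h_tau_zpow] at this
    simpa [nuGL, Matrix.mul_fin_two] using this

theorem h_nud {d : ℤ} (hd : d = 1 ∨ d = -1) :
    nu ^ ((1 - d) / 2) * tau = tau ^ d * nu ^ ((1 - d) / 2) := by
  rcases hd with rfl | rfl
  · simp
  · have : ((1 - (-1 : ℤ)) / 2) = 1 := by norm_num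
    rw [this, _root_.zpow_one, _root_.zpow_neg_one, ← h_nutau, mul_assoc, h_nu2, mul_one]

theorem h_nud' {d : ℤ} (hd : d = 1 ∨ d = -1) :
    nu ^ ((1 - d) / 2) * tau⁻¹ = tau ^ (-d) * nu ^ ((1 - d) / 2) := by
  rw [mul_inv_eq_iff_eq_mul, mul_assoc, h_nud hd, _root_.zpow_neg, inv_mul_cancel_left]

/-- For a Neumann subgroup Ŝ of M̂ = PGL(2,ℤ), the functions
ι : ℤ → ℤ and δ : ℤ → {1,−1} determined by Ŝτⁿω = Ŝτ^{ι(n)}ν^{(1−δ(n))/2}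
satisfy ι(ι(n) + δ(n)) = ι(n−1) − δ(n−1) for every n ∈ ℤ. -/
theorem neumann_iota_functional_equation
    (Shat : Subgroup Mhat) (hN : IsNeumann Shat)
    (iota : ℤ → ℤ) (delta : ℤ → ℤ) (hdelta : ∀ n, delta n = 1 ∨ delta n = -1)
    (hcoset : ∀ n : ℤ,
      (tau ^ n * omega) * (tau ^ iota n * nu ^ ((1 - delta n) / 2))⁻¹ ∈ Shat) :
    ∀ n : ℤ, iota (iota n + delta n) = iota (n - 1) - delta (n - 1) := by
  intro n
  have h1 := hcoset n
  have h2 := hcoset (n - 1)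
  have h3 := hcoset (iota n + delta n)
  have e1 := h_nud (hdelta n)
  have e2 := h_nud' (hdelta (n - 1))
  have ec : nu ^ ((1 - delta n) / 2) * omega = omega * nu ^ ((1 - delta n) / 2) :=
    (show Commute omega nu from h_omnu).zpow_right _ |>.eq.symm
  generalize (1 - delta n) / 2 = p at *
  generalize (1 - delta (n - 1)) / 2 = q at *
  generalize (1 - delta (iota n + delta n)) / 2 = r at *
  have hb : omega * tau * omega = tau⁻¹ * omega * tau⁻¹ := by
    rw [eq_mul_inv_iff_mul_eq, eq_inv_mul_iff_mul_eq, ← mul_assoc]; exact h_braid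
  -- left coset data
  have A : (tau ^ n * (omega * tau * omega)) *
      (tau ^ (iota n + delta n) * omega * nu ^ p)⁻¹ ∈ Shat := by
    have : tau ^ (iota n + delta n) * omega * nu ^ p = tau ^ iota n * nu ^ p * (tau * omega) := by
      rw [mul_assoc, ← ec, _root_.zpow_add, ← mul_assoc, mul_assoc (tau ^ iota n), ← e1]
      simp only [mul_assoc]
    rw [this]
    convert h1 using 1
    group
  have B : (tau ^ n * (omega * tau * omega)) *
      (tau ^ (iota (n - 1) - delta (n - 1)) * nu ^ q)⁻¹ ∈ Shat := by
    rw [hb, sub_eq_add_neg, _root_.zpow_add, mul_assoc (tau ^ iota (n - 1)), ← e2]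
    convert h2 using 1
    group
  have C : (tau ^ (iota n + delta n) * omega * nu ^ p) *
      (tau ^ iota (iota n + delta n) * nu ^ r * nu ^ p)⁻¹ ∈ Shat := by
    convert h3 using 1
    group
  have D := Shat.mul_mem (Shat.mul_mem (Shat.inv_mem B) A) C
  have E : tau ^ (iota (n - 1) - delta (n - 1)) * nu ^ (q - p - r) *
      tau ^ (-iota (iota n + delta n)) ∈ Shat := by
    convert D using 1
    group
  have ht : tau ∈ That := Subgroup.subset_closure (by simp)
  have hn : nu ∈ That := Subgroup.subset_closure (by simp)
  have F : tau ^ (iota (n - 1) - delta (n - 1)) * nu ^ (q - p - r) *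
      tau ^ (-iota (iota n + delta n)) = 1 := by
    have : _ ∈ Shat ⊓ That := ⟨E, That.mul_mem (That.mul_mem (That.zpow_mem ht _)
      (That.zpow_mem hn _)) (That.zpow_mem ht _)⟩
    rw [hN.2] at this
    exact Subgroup.mem_bot.mp this
  have G : tau ^ (iota (n - 1) - delta (n - 1) - iota (iota n + delta n)) *
      nu ^ (q - p - r) = 1 := by
    rw [sub_eq_neg_add _ (iota (iota n + delta n)), _root_.zpow_add, mul_assoc]
    have := mul_eq_one_iff_eq_inv.mp F
    rw [this, ← _root_.zpow_neg, neg_neg, ← _root_.zpow_add, neg_add_cancel, _root_.zpow_zero]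
  have := h_uniq G
  omega
end
end

section
/- Let Ŝ be a Neumann subgroup of M̂ = PGL(2,ℤ), and let ι : ℤ → ℤ and δ : ℤ → {1,−1} be the unique functions satisfying Ŝ τ^n ω = Ŝ τ^{ι(n)} ν^{(1−δ(n))/2} for all n ∈ ℤ. Suppose g ∈ M̂ and the three right cosets Ŝg, Ŝgφ, Ŝgφ² equal Ŝ τ^k ν^{ε_k}, Ŝ τ^l ν^{ε_l}, Ŝ τ^m ν^{ε_m} respectively, for integers k, l, m and ε_k, ε_l, ε_m ∈ {0,1}. Then δ(k)·δ(l)·δ(m) = 1. -/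
open Matrix Pointwise

noncomputable section

def auxD : Mhat →* ℤˣ := QuotientGroup.lift pmI Matrix.GeneralLinearGroup.det (by
  intro x hx
  have h : pmI ≤ MonoidHom.ker (Matrix.GeneralLinearGroup.det (n := Fin 2) (R := ℤ)) := by
    unfold pmI
    rw [Subgroup.zpowers_le, MonoidHom.mem_ker]
    ext
    simp [Matrix.det_fin_two]
  exact h hx)

lemma auxD_tau : auxD tau = 1 := by
  change Matrix.GeneralLinearGroup.det tauGL = 1
  ext
  simp [tauGL, Matrix.det_fin_two]

lemma auxD_nu : auxD nu = -1 := by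
  change Matrix.GeneralLinearGroup.det nuGL = -1
  ext
  simp [nuGL, Matrix.det_fin_two]

lemma pr_neg (a : GL2Z) : pr (-a) = pr a := by
  have h : pr (-1) = 1 := (QuotientGroup.eq_one_iff _).2 (Subgroup.mem_zpowers (-1))
  have : -a = (-1) * a := by simp
  rw [this, map_mul, h, one_mul]

lemma phi_eq : phi = omega * tau := by
  change pr phiGL = pr omegaGL * pr tauGL
  rw [← map_mul]
  congr 1
  apply Units.ext
  change !![0,-1;1,1] = !![0,-1;1,0] * (!![1,1;0,1] : Matrix (Fin 2) (Fin 2) ℤ)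
  decide

lemma phi_cube : phi ^ 3 = 1 := by
  have h : phiGL ^ 3 = -1 := by
    apply Units.ext
    change (!![0,-1;1,1] : Matrix (Fin 2) (Fin 2) ℤ) ^ 3 = -1
    decide
  change pr phiGL ^ 3 = 1
  rw [← map_pow, h, pr_neg, map_one]

lemma comm_nu_omega : Commute nu omega := by
  change pr nuGL * pr omegaGL = pr omegaGL * pr nuGL
  rw [← map_mul, ← map_mul, ← pr_neg (omegaGL * nuGL)]
  congr 1
  apply Units.ext
  change !![-1,0;0,1] * !![0,-1;1,0] = -(!![0,-1;1,0] * !![-1,0;0,1] : Matrix (Fin 2) (Fin 2) ℤ)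
  decide

lemma aux_step (S : Subgroup Mhat) (hN : S ⊓ That = ⊥) (x : Mhat) (k l e f i d : ℤ)
    (h0 : (tau ^ k * omega) * (tau ^ i * nu ^ d)⁻¹ ∈ S)
    (h1 : x * (tau ^ k * nu ^ e)⁻¹ ∈ S)
    (h2 : (x * phi) * (tau ^ l * nu ^ f)⁻¹ ∈ S) :
    (-1 : ℤˣ) ^ f = (-1) ^ d * (-1) ^ e := by
  have ht : tau ∈ That := Subgroup.subset_closure (by simp)
  have hn : nu ∈ That := Subgroup.subset_closure (by simp)
  set t := (tau ^ i * nu ^ d * nu ^ e * tau) * (tau ^ l * nu ^ f)⁻¹ with htd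
  have hc : nu ^ e * omega = omega * nu ^ e := (comm_nu_omega.zpow_left e).eq
  have hT : t ∈ That := by
    exact That.mul_mem (That.mul_mem (That.mul_mem (That.mul_mem (That.zpow_mem ht _)
      (That.zpow_mem hn _)) (That.zpow_mem hn _)) ht)
      (That.inv_mem (That.mul_mem (That.zpow_mem ht _) (That.zpow_mem hn _)))
  have hS : t ∈ S := by
    have h3 := S.mul_mem (S.inv_mem (S.mul_mem h1 h0)) h2
    convert h3 using 1
    have ho : omega = nu ^ e * omega * (nu ^ e)⁻¹ := by rw [hc]; group
    rw [htd, phi_eq]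
    have : omega⁻¹ * nu ^ e * omega = nu ^ e := by rw [mul_assoc, hc]; group
    calc _ = tau ^ i * nu ^ d * (omega⁻¹ * nu ^ e * omega) * tau * (tau ^ l * nu ^ f)⁻¹ := by
          rw [this]
      _ = _ := by group
  have h1' : t = 1 := by
    have : t ∈ S ⊓ That := ⟨hS, hT⟩
    rw [hN] at this
    exact Subgroup.mem_bot.1 this
  have h4 := congrArg auxD h1'
  simp only [htd, map_mul, map_inv, map_zpow, auxD_tau, auxD_nu, _root_.one_zpow, one_mul, mul_one,
    map_one] at h4
  exact (mul_inv_eq_one.1 h4).symm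

/-- For a Neumann subgroup Ŝ of M̂ = PGL(2,ℤ) with associated
functions ι, δ, if the three cosets Ŝg, Ŝgφ, Ŝgφ² equal Ŝτ^k ν^{ε_k},
Ŝτ^l ν^{ε_l}, Ŝτ^m ν^{ε_m}, then δ(k)·δ(l)·δ(m) = 1. -/
theorem neumann_delta_product_on_B_cycle
    (Shat : Subgroup Mhat) (hN : IsNeumann Shat)
    (iota : ℤ → ℤ) (delta : ℤ → ℤ) (hdelta : ∀ n, delta n = 1 ∨ delta n = -1)
    (hcoset : ∀ n : ℤ,
      (tau ^ n * omega) * (tau ^ iota n * nu ^ ((1 - delta n) / 2))⁻¹ ∈ Shat)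
    (g : Mhat) (k l m : ℤ) (ek el em : ℤ)
    (hek : ek = 0 ∨ ek = 1) (hel : el = 0 ∨ el = 1) (hem : em = 0 ∨ em = 1)
    (hgk : g * (tau ^ k * nu ^ ek)⁻¹ ∈ Shat)
    (hgl : (g * phi) * (tau ^ l * nu ^ el)⁻¹ ∈ Shat)
    (hgm : (g * phi ^ 2) * (tau ^ m * nu ^ em)⁻¹ ∈ Shat) :
    delta k * delta l * delta m = 1 := by
  have hg : g * phi ^ 2 * phi = g := by
    rw [mul_assoc, ← pow_succ, phi_cube, mul_one]
  have a1 := aux_step Shat hN.2 g k l ek el _ _ (hcoset k) hgk hgl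
  have a2 := aux_step Shat hN.2 (g * phi) l m el em _ _ (hcoset l) hgl
    (by rw [mul_assoc g, ← pow_two]; exact hgm)
  have a3 := aux_step Shat hN.2 (g * phi ^ 2) m k em ek _ _ (hcoset m) hgm (by rw [hg]; exact hgk)
  have key : (-1 : ℤˣ) ^ ((1 - delta m) / 2) * ((-1) ^ ((1 - delta l) / 2) *
      (-1) ^ ((1 - delta k) / 2)) = 1 := by
    rw [a2, a1] at a3
    rw [← mul_assoc, ← mul_assoc] at a3
    rw [← mul_assoc]
    exact (right_eq_mul.1 a3)
  rcases hdelta k with h | h <;> rcases hdelta l with h' | h' <;> rcases hdelta m with h'' | h'' <;>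
    rw [h, h', h''] at key ⊢ <;> revert key <;> decide
end
end
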